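/- Let r ≥ 2 and m ≥ 1 be integers. Then there exists a real constant c > 0 (depending only on r and m) such that for every integer a ≥ 1 and every subgroup G of GL_r(ℤ/aℤ) which equals the full preimage of its image under the reduction map GL_r(ℤ/aℤ) → GL_r(ℤ/gcd(a,m)ℤ), one has c · a^(r²−1) · |Scal_G| ≤ |G| ≤ a^(r²−1) · |Scal_G|. -/

import Mathlib

/-- The subgroup of scalar matrices `{λ·I : λ ∈ Rˣ}` inside `GL n R`. -/
def scalarSubgroup (n : Type*) [DecidableEq n] [Fintype n] (R : Type*) [CommRing R] :
    Subgroup (Matrix.GeneralLinearGroup n R) :=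
  (Units.map (Matrix.scalar n).toMonoidHom).range

/-- The reduction map `GL_r(ℤ/aℤ) → GL_r(ℤ/bℤ)` for `b ∣ a`, induced by entrywise
reduction via the canonical ring homomorphism `ℤ/aℤ → ℤ/bℤ`. -/
def glReduction (r : ℕ) {a b : ℕ} (h : b ∣ a) :
    Matrix.GeneralLinearGroup (Fin r) (ZMod a) →* Matrix.GeneralLinearGroup (Fin r) (ZMod b) :=
  Matrix.GeneralLinearGroup.map (ZMod.castHom h (ZMod b))

/-- Number of elements of a full preimage under a surjective additive homomorphism. -/
lemma aux_card_preimage {A B : Type*} [AddCommGroup A] [AddCommGroup B]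
    (f : A →+ B) (hf : Function.Surjective f) (P : B → Prop) :
    Nat.card {x // P (f x)} = Nat.card {b // P b} * Nat.card f.ker := by
  obtain ⟨s, hs⟩ := hf.hasRightInverse
  rw [← Nat.card_prod]
  refine Nat.card_congr
    { toFun := fun x => (⟨f x.1, x.2⟩, ⟨x.1 - s (f x.1), by
        rw [AddMonoidHom.mem_ker, map_sub, hs, sub_self]⟩)
      invFun := fun y => ⟨s y.1.1 + y.2.1, by
        have h := y.2.2
        rw [AddMonoidHom.mem_ker] at h
        rw [map_add, hs, h, add_zero]; exact y.1.2⟩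
      left_inv := ?_
      right_inv := ?_ }
  · rintro ⟨x, hx⟩
    simp
  · rintro ⟨⟨b, hb⟩, ⟨k, hk⟩⟩
    have h := hk
    rw [AddMonoidHom.mem_ker] at h
    have e : f (s b + k) = b := by rw [map_add, hs, h, add_zero]
    simp [e]

lemma aux_card_units (M : Type*) [Monoid M] : Nat.card Mˣ = Nat.card {x : M // IsUnit x} := by
  refine Nat.card_congr (Equiv.ofBijective (fun u => ⟨u.1, u.isUnit⟩) ⟨?_, ?_⟩)
  · intro u v h
    exact Units.ext (by simpa using h)
  · rintro ⟨x, u, rfl⟩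
    exact ⟨u, rfl⟩

lemma aux_isUnit_cast (p j : ℕ) (hp : p.Prime) (h : p ∣ p ^ (j + 1)) (x : ZMod (p ^ (j + 1))) :
    IsUnit (ZMod.castHom h (ZMod p) x) ↔ IsUnit x := by
  have : NeZero (p ^ (j + 1)) := ⟨pow_ne_zero _ hp.ne_zero⟩
  obtain ⟨n, rfl⟩ : ∃ n : ℕ, (n : ZMod (p ^ (j + 1))) = x := ⟨x.val, by simp⟩
  rw [map_natCast, ZMod.isUnit_iff_coprime, ZMod.isUnit_iff_coprime,
    Nat.coprime_pow_right_iff (Nat.succ_pos j)]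

lemma aux_card_matrix (r a : ℕ) : Nat.card (Matrix (Fin r) (Fin r) (ZMod a)) = a ^ (r ^ 2) := by
  have : Nat.card (Fin r → Fin r → ZMod a) = a ^ (r ^ 2) := by
    rw [Nat.card_fun, Nat.card_fun]
    simp [← pow_mul, sq]
  exact this

lemma aux_card_GL_prime_pow (r p j : ℕ) (hp : p.Prime) :
    Nat.card (Matrix.GeneralLinearGroup (Fin r) (ZMod (p ^ (j + 1))))
      = p ^ (j * r ^ 2) * Nat.card (Matrix.GeneralLinearGroup (Fin r) (ZMod p)) := by
  have h : p ∣ p ^ (j + 1) := dvd_pow_self p (Nat.succ_ne_zero j)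
  let f : Matrix (Fin r) (Fin r) (ZMod (p ^ (j + 1))) →+ Matrix (Fin r) (Fin r) (ZMod p) :=
    ((ZMod.castHom h (ZMod p)).mapMatrix :
      Matrix (Fin r) (Fin r) (ZMod (p ^ (j + 1))) →+* Matrix (Fin r) (Fin r) (ZMod p)).toAddMonoidHom
  have hfv : ∀ M, f M = (ZMod.castHom h (ZMod p)).mapMatrix M := fun _ => rfl
  have hf : Function.Surjective f := by
    intro N
    choose g hg using ZMod.castHom_surjective h
    refine ⟨N.map g, ?_⟩
    rw [hfv]
    ext i k
    simpa using hg (N i k)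
  have key : ∀ M, IsUnit (f M) ↔ IsUnit M := by
    intro M
    rw [hfv, Matrix.isUnit_iff_isUnit_det, Matrix.isUnit_iff_isUnit_det, ← RingHom.map_det,
      aux_isUnit_cast p j hp]
  have h1 := aux_card_preimage f hf (fun N => IsUnit N)
  have h2 := aux_card_preimage f hf (fun _ => True)
  simp only [key] at h1
  rw [← aux_card_units, ← aux_card_units] at h1
  have e1 : Nat.card {x : Matrix (Fin r) (Fin r) (ZMod (p ^ (j + 1))) // True}
      = (p ^ (j + 1)) ^ (r ^ 2) := by
    rw [← aux_card_matrix]; exact Nat.card_congr (Equiv.subtypeUnivEquiv (fun _ => trivial))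
  have e2 : Nat.card {x : Matrix (Fin r) (Fin r) (ZMod p) // True} = p ^ (r ^ 2) := by
    rw [← aux_card_matrix]; exact Nat.card_congr (Equiv.subtypeUnivEquiv (fun _ => trivial))
  rw [e1, e2] at h2
  have h3 : Nat.card f.ker = p ^ (j * r ^ 2) := by
    have : 0 < p ^ (r ^ 2) := pow_pos hp.pos _
    apply Nat.eq_of_mul_eq_mul_left this
    rw [← h2, ← pow_mul, ← pow_add]; congr 1; ring
  rw [h3, mul_comm] at h1
  exact h1

lemma aux_card_GL_mul (r a b : ℕ) (hab : a.Coprime b) :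
    Nat.card (Matrix.GeneralLinearGroup (Fin r) (ZMod (a * b)))
      = Nat.card (Matrix.GeneralLinearGroup (Fin r) (ZMod a)) *
        Nat.card (Matrix.GeneralLinearGroup (Fin r) (ZMod b)) := by
  let e := (ZMod.chineseRemainder hab)
  let f : Matrix (Fin r) (Fin r) (ZMod (a * b)) →+*
      Matrix (Fin r) (Fin r) (ZMod a) × Matrix (Fin r) (Fin r) (ZMod b) :=
    RingHom.prod (((RingHom.fst _ _).comp e.toRingHom).mapMatrix)
      (((RingHom.snd _ _).comp e.toRingHom).mapMatrix)
  have hf : Function.Bijective f := by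
    constructor
    · intro M N h
      have h1 := congrArg Prod.fst h
      have h2 := congrArg Prod.snd h
      ext i k
      apply e.injective
      apply Prod.ext
      · exact congrFun (congrFun h1 i) k
      · exact congrFun (congrFun h2 i) k
    · rintro ⟨M, N⟩
      refine ⟨Matrix.of fun i k => e.symm (M i k, N i k), ?_⟩
      apply Prod.ext
      · ext i k
        change (e (e.symm (M i k, N i k))).1 = _
        simp
      · ext i k
        change (e (e.symm (M i k, N i k))).2 = _
        simp
  rw [← Nat.card_prod]
  exact Nat.card_congr
    ((Units.mapEquiv (RingEquiv.ofBijective f hf).toMulEquiv).trans MulEquiv.prodUnits).toEquiv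

lemma aux_card_GL_prime (s p : ℕ) (hp : p.Prime) :
    Nat.card (Matrix.GeneralLinearGroup (Fin (s + 1)) (ZMod p))
      = (∏ i ∈ Finset.range s, (p ^ (s + 1) - p ^ i)) * (p ^ s * (p - 1)) := by
  have : Fact p.Prime := ⟨hp⟩
  rw [Matrix.card_GL_field, ZMod.card, Fin.prod_univ_eq_prod_range (fun i => p ^ (s + 1) - p ^ i),
    Finset.prod_range_succ]
  congr 1
  rw [Nat.mul_sub, pow_succ, mul_one]

lemma aux_bounds (s a : ℕ) (ha : a ≠ 0) :
    Nat.card (Matrix.GeneralLinearGroup (Fin (s + 1)) (ZMod a)) ≤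
        a ^ ((s + 1) ^ 2 - 1) * a.totient ∧
    (a : ℝ) ^ ((s + 1) ^ 2 - 1) * a.totient * (∏ p ∈ a.primeFactors, (1 - 1 / (p : ℝ) ^ 2)) ^ s ≤
      Nat.card (Matrix.GeneralLinearGroup (Fin (s + 1)) (ZMod a)) := by
  induction a using Nat.recOnPosPrimePosCoprime with
  | zero => exact absurd rfl ha
  | one =>
    have : Subsingleton (ZMod 1) := inferInstance
    letI : Unique (Matrix.GeneralLinearGroup (Fin (s + 1)) (ZMod 1)) :=
      { default := 1, uniq := fun x => Units.ext (by ext i k; exact Subsingleton.elim _ _) }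
    simp
  | prime_pow p n hp hn =>
    obtain ⟨j, rfl⟩ : ∃ j, n = j + 1 := ⟨n - 1, by omega⟩
    have hsq : (s + 1) ^ 2 - 1 = (s + 1) * s + s := by
      have : (s + 1) ^ 2 = (s + 1) * s + s + 1 := by ring
      omega
    rw [aux_card_GL_prime_pow _ _ _ hp, aux_card_GL_prime _ _ hp,
      Nat.totient_prime_pow_succ hp, hsq, Nat.primeFactors_prime_pow (by omega) hp,
      Finset.prod_singleton]
    set P := ∏ i ∈ Finset.range s, (p ^ (s + 1) - p ^ i) with hP
    have hU : P ≤ p ^ ((s + 1) * s) := by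
      calc P ≤ ∏ i ∈ Finset.range s, p ^ (s + 1) :=
            Finset.prod_le_prod' (fun i _ => Nat.sub_le _ _)
        _ = _ := by simp [pow_mul]
    have hp0 : (0 : ℝ) < p := by exact_mod_cast hp.pos
    have hp1 : (1 : ℝ) ≤ p := by exact_mod_cast hp.one_le
    have hL : (p : ℝ) ^ ((s + 1) * s) * (1 - 1 / (p : ℝ) ^ 2) ^ s ≤ (P : ℝ) := by
      have : (p : ℝ) ^ ((s + 1) * s) * (1 - 1 / (p : ℝ) ^ 2) ^ s
          = ∏ i ∈ Finset.range s, ((p : ℝ) ^ (s + 1) * (1 - 1 / (p : ℝ) ^ 2)) := by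
        simp [pow_mul, mul_pow]
      rw [this, hP, Nat.cast_prod]
      apply Finset.prod_le_prod
      · intro i _
        apply mul_nonneg (by positivity)
        rw [sub_nonneg, div_le_one (by positivity)]
        exact one_le_pow₀ hp1
      · intro i hi
        have hi' : i + 2 ≤ s + 1 := by have := Finset.mem_range.1 hi; omega
        rw [Nat.cast_sub (Nat.pow_le_pow_right hp.pos (by omega))]
        push_cast
        have h1 : (p : ℝ) ^ i * p ^ 2 ≤ p ^ (s + 1) := by
          rw [← pow_add]; exact pow_le_pow_right₀ hp1 hi'
        have h2 : (p : ℝ) ^ i ≤ p ^ (s + 1) / p ^ 2 := by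
          rw [le_div_iff₀ (by positivity)]; exact h1
        have h3 : (p : ℝ) ^ (s + 1) * (1 - 1 / (p : ℝ) ^ 2)
          = (p : ℝ) ^ (s + 1) - p ^ (s + 1) / p ^ 2 := by ring
        rw [h3]; linarith
    constructor
    · calc p ^ (j * (s + 1) ^ 2) * (P * (p ^ s * (p - 1)))
          ≤ p ^ (j * (s + 1) ^ 2) * (p ^ ((s + 1) * s) * (p ^ s * (p - 1))) := by gcongr
        _ = _ := by ring
    · push_cast
      calc ((p : ℝ) ^ (j + 1)) ^ ((s + 1) * s + s) * ((p : ℝ) ^ j * ((p - 1 : ℕ) : ℝ)) *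
            (1 - 1 / (p : ℝ) ^ 2) ^ s
          = (p : ℝ) ^ (j * (s + 1) ^ 2) * (((p : ℝ) ^ ((s + 1) * s) * (1 - 1 / (p : ℝ) ^ 2) ^ s)
            * ((p : ℝ) ^ s * ((p - 1 : ℕ) : ℝ))) := by
              generalize (1 - 1 / (p : ℝ) ^ 2) ^ s = x
              ring
        _ ≤ _ := by gcongr
  | coprime a b h1a h1b hab iha ihb =>
    obtain ⟨ua, la⟩ := iha (by omega)
    obtain ⟨ub, lb⟩ := ihb (by omega)
    rw [aux_card_GL_mul _ _ _ hab, Nat.totient_mul hab, hab.primeFactors_mul,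
      Finset.prod_union hab.disjoint_primeFactors]
    have hnn : ∀ c : ℕ, 0 ≤ ∏ p ∈ c.primeFactors, (1 - 1 / (p : ℝ) ^ 2) := by
      intro c
      refine Finset.prod_nonneg fun p hp => ?_
      have hp1 : (1 : ℝ) ≤ p := by exact_mod_cast (Nat.prime_of_mem_primeFactors hp).one_le
      rw [sub_nonneg, div_le_one (by positivity)]
      exact one_le_pow₀ hp1
    have ha0 := hnn a
    have hb0 := hnn b
    constructor
    · calc _ ≤ _ := Nat.mul_le_mul ua ub
        _ = _ := by ring
    · push_cast
      refine le_trans (le_of_eq ?_) (mul_le_mul la lb (by positivity) (by positivity))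
      generalize ∏ p ∈ a.primeFactors, (1 - 1 / (p : ℝ) ^ 2) = x
      generalize ∏ p ∈ b.primeFactors, (1 - 1 / (p : ℝ) ^ 2) = y
      ring

lemma aux_telescope (N : ℕ) :
    ∏ n ∈ Finset.range N, (1 - 1 / ((n : ℝ) + 2) ^ 2) = ((N : ℝ) + 2) / (2 * (N + 1)) := by
  induction N with
  | zero => simp
  | succ N ih =>
    rw [Finset.prod_range_succ, ih]
    push_cast
    field_simp
    ring

lemma aux_half (a : ℕ) : (1 / 2 : ℝ) ≤ ∏ p ∈ a.primeFactors, (1 - 1 / (p : ℝ) ^ 2) := by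
  have h1 : (1 / 2 : ℝ) ≤ ∏ n ∈ Finset.range a, (1 - 1 / ((n : ℝ) + 2) ^ 2) := by
    rw [aux_telescope, div_le_div_iff₀ (by norm_num) (by positivity)]
    linarith
  have h2 : ∏ n ∈ Finset.range a, (1 - 1 / ((n : ℝ) + 2) ^ 2)
      = ∏ n ∈ (Finset.range a).image (fun k : ℕ => k + 2), (1 - 1 / (n : ℝ) ^ 2) := by
    rw [Finset.prod_image (fun x _ y _ h => by simpa using h)]
    push_cast
    rfl
  have hmem : ∀ n ∈ (Finset.range a).image (fun k : ℕ => k + 2), (1 : ℝ) ≤ n := by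
    intro n hn
    obtain ⟨k, -, rfl⟩ := Finset.mem_image.1 hn
    push_cast
    linarith [Nat.cast_nonneg (α := ℝ) k]
  rw [h2] at h1
  have hnn : ∀ n ∈ (Finset.range a).image (fun k : ℕ => k + 2), (0 : ℝ) ≤ 1 - 1 / (n : ℝ) ^ 2 := by
    intro n hn
    have := hmem n hn
    rw [sub_nonneg, div_le_one (by positivity)]
    exact one_le_pow₀ this
  have hsub : a.primeFactors ⊆ (Finset.range a).image (fun k : ℕ => k + 2) := by
    intro p hp
    have h2p := (Nat.prime_of_mem_primeFactors hp).two_le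
    have := Nat.le_of_mem_primeFactors hp
    exact Finset.mem_image.2 ⟨p - 2, Finset.mem_range.2 (by omega), by omega⟩
  refine h1.trans ?_
  rw [← Finset.prod_sdiff hsub]
  refine mul_le_of_le_one_left (Finset.prod_nonneg fun p hp => hnn p (hsub hp))
    (Finset.prod_le_one (fun n hn => hnn n (Finset.sdiff_subset hn)) fun n _ => ?_)
  have : (0 : ℝ) ≤ 1 / (n : ℝ) ^ 2 := by positivity
  linarith

lemma aux_card_scalar (s a : ℕ) (ha : a ≠ 0) :
    Nat.card (scalarSubgroup (Fin (s + 1)) (ZMod a)) = a.totient := by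
  have : NeZero a := ⟨ha⟩
  have hinj : Function.Injective
      (Units.map (Matrix.scalar (Fin (s + 1)) : ZMod a →+* _).toMonoidHom) := by
    apply Units.map_injective
    intro x y h
    exact Matrix.scalar_inj.1 h
  unfold scalarSubgroup
  rw [← Nat.card_congr (MonoidHom.ofInjective hinj).toEquiv, Nat.card_eq_fintype_card,
    ZMod.card_units_eq_totient]

/-- Let `r ≥ 2` and `m ≥ 1`. There is a constant `c > 0`, depending only on `r` and `m`,
such that for every `a ≥ 1` and every subgroup `G ≤ GL_r(ℤ/aℤ)` which is the full preimage
of its image under reduction `GL_r(ℤ/aℤ) → GL_r(ℤ/gcd(a,m)ℤ)`, one has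
`c · a^(r²−1) · |Scal_G| ≤ |G| ≤ a^(r²−1) · |Scal_G|`. -/
theorem degree_bounds_int (r m : ℕ) (hr : 2 ≤ r) (hm : 1 ≤ m) :
    ∃ c : ℝ, 0 < c ∧
      ∀ a : ℕ, 1 ≤ a →
        ∀ G : Subgroup (Matrix.GeneralLinearGroup (Fin r) (ZMod a)),
          G = Subgroup.comap (glReduction r (Nat.gcd_dvd_left a m))
                (Subgroup.map (glReduction r (Nat.gcd_dvd_left a m)) G) →
          c * (a : ℝ) ^ (r ^ 2 - 1) *
              (Nat.card (G ⊓ scalarSubgroup (Fin r) (ZMod a) : Subgroup _) : ℝ)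
            ≤ (Nat.card G : ℝ) ∧
          (Nat.card G : ℝ)
            ≤ (a : ℝ) ^ (r ^ 2 - 1) *
              (Nat.card (G ⊓ scalarSubgroup (Fin r) (ZMod a) : Subgroup _) : ℝ) := by
  obtain ⟨s, rfl⟩ : ∃ s, r = s + 1 := ⟨r - 1, by omega⟩
  have hm0 : (0 : ℝ) < m := by exact_mod_cast hm
  refine ⟨(1 / 2) ^ s / (m : ℝ) ^ ((s + 1) ^ 2), by positivity, ?_⟩
  intro a ha G hG
  have ha0 : a ≠ 0 := by omega
  have : NeZero a := ⟨ha0⟩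
  have : Finite (Matrix (Fin (s + 1)) (Fin (s + 1)) (ZMod a)) := 
    inferInstanceAs (Finite (Fin (s + 1) → Fin (s + 1) → ZMod a))
  have : Finite (Matrix.GeneralLinearGroup (Fin (s + 1)) (ZMod a)) :=
    inferInstanceAs (Finite (Matrix (Fin (s + 1)) (Fin (s + 1)) (ZMod a))ˣ)
  obtain ⟨hU, hL⟩ := aux_bounds s a ha0
  have hS := aux_card_scalar s a ha0
  set S := scalarSubgroup (Fin (s + 1)) (ZMod a) with hSdef
  have hφ : 0 < a.totient := Nat.totient_pos.2 (by omega)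
  constructor
  · set g := Nat.gcd a m
    set f := glReduction (s + 1) (Nat.gcd_dvd_left a m) with hf
    have hg0 : g ≠ 0 := Nat.gcd_ne_zero_left ha0
    have : NeZero g := ⟨hg0⟩
    have : Finite (Matrix (Fin (s + 1)) (Fin (s + 1)) (ZMod g)) := 
      inferInstanceAs (Finite (Fin (s + 1) → Fin (s + 1) → ZMod g))
    have : Finite (Matrix.GeneralLinearGroup (Fin (s + 1)) (ZMod g)) :=
      inferInstanceAs (Finite (Matrix (Fin (s + 1)) (Fin (s + 1)) (ZMod g))ˣ)
    have hker : f.ker ≤ G := by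
      rw [hG]
      intro x hx
      rw [Subgroup.mem_comap, MonoidHom.mem_ker.1 hx]
      exact one_mem _
    have h1 : Nat.card f.ker ≤ Nat.card G := Subgroup.card_le_of_le hker
    have h2 : Nat.card f.ker * Nat.card f.range
        = Nat.card (Matrix.GeneralLinearGroup (Fin (s + 1)) (ZMod a)) := by
      rw [← Subgroup.index_ker, Subgroup.card_mul_index]
    have h3 : Nat.card f.range ≤ m ^ ((s + 1) ^ 2) := by
      calc Nat.card f.range ≤ Nat.card (Matrix.GeneralLinearGroup (Fin (s + 1)) (ZMod g)) :=
            Nat.card_le_card_of_injective _ Subtype.val_injective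
        _ ≤ Nat.card (Matrix (Fin (s + 1)) (Fin (s + 1)) (ZMod g)) :=
            Nat.card_le_card_of_injective _ Units.val_injective
        _ = g ^ ((s + 1) ^ 2) := aux_card_matrix _ _
        _ ≤ _ := Nat.pow_le_pow_left (Nat.gcd_le_right _ hm) _
    have h4 : Nat.card (G ⊓ S : Subgroup _) ≤ a.totient := by
      rw [← hS]; exact Subgroup.card_le_of_le inf_le_right
    have h5 : Nat.card (Matrix.GeneralLinearGroup (Fin (s + 1)) (ZMod a))
        ≤ Nat.card G * m ^ ((s + 1) ^ 2) := by
      rw [← h2]; exact Nat.mul_le_mul h1 h3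
    have h5' : (Nat.card (Matrix.GeneralLinearGroup (Fin (s + 1)) (ZMod a)) : ℝ)
        ≤ Nat.card G * (m : ℝ) ^ ((s + 1) ^ 2) := by exact_mod_cast h5
    have h4' : (Nat.card (G ⊓ S : Subgroup _) : ℝ) ≤ a.totient := by exact_mod_cast h4
    have h6 : (1 / 2 : ℝ) ^ s ≤ (∏ p ∈ a.primeFactors, (1 - 1 / (p : ℝ) ^ 2)) ^ s :=
      pow_le_pow_left₀ (by norm_num) (aux_half a) s
    have h7 : (1 / 2 : ℝ) ^ s * (a : ℝ) ^ ((s + 1) ^ 2 - 1) * Nat.card (G ⊓ S : Subgroup _)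
        ≤ Nat.card G * (m : ℝ) ^ ((s + 1) ^ 2) := by
      refine le_trans ?_ (hL.trans h5')
      calc (1 / 2 : ℝ) ^ s * (a : ℝ) ^ ((s + 1) ^ 2 - 1) * Nat.card (G ⊓ S : Subgroup _)
          ≤ (1 / 2 : ℝ) ^ s * (a : ℝ) ^ ((s + 1) ^ 2 - 1) * a.totient := by gcongr
        _ = (a : ℝ) ^ ((s + 1) ^ 2 - 1) * a.totient * (1 / 2 : ℝ) ^ s := by ring
        _ ≤ _ := by gcongr
    rw [div_mul_eq_mul_div, div_mul_eq_mul_div, div_le_iff₀ (by positivity)]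
    exact h7
  · have h1 : Nat.card (G ⊓ S : Subgroup _) * (G ⊓ S).relIndex G = Nat.card G := by
      rw [← Subgroup.card_mul_index ((G ⊓ S).subgroupOf G)]
      congr 1
      exact (Nat.card_congr (Subgroup.subgroupOfEquivOfLe inf_le_left).toEquiv).symm
    rw [Subgroup.inf_relIndex_left] at h1
    have h2 : S.relIndex G ≤ S.index := by
      rw [← Subgroup.relIndex_top_right S]
      refine Subgroup.relIndex_le_of_le_right le_top ?_
      rw [Subgroup.relIndex_top_right]
      exact Subgroup.index_ne_zero_of_finite
    have h3 : S.index ≤ a ^ ((s + 1) ^ 2 - 1) := by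
      rw [← Subgroup.card_mul_index S, hS, mul_comm] at hU
      exact Nat.le_of_mul_le_mul_right hU hφ
    have h4 : Nat.card G ≤ a ^ ((s + 1) ^ 2 - 1) * Nat.card (G ⊓ S : Subgroup _) := by
      rw [← h1, mul_comm]
      exact Nat.mul_le_mul_right _ (h2.trans h3)
    exact_mod_cast h4
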